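/- Let 1 ≤ q < p < ∞, let μ, ν be positive measures on (X, 𝒯) with 0 < μ(I) < ∞ and ν(I) < ∞ for all I ∈ 𝓛, and let α = {α_I : I ∈ 𝓛} be nonnegative constants. Let N := sup over nonnegative f with ‖f‖_{L^p(μ)} = 1 of (∫_X (Σ_{I ∈ 𝓛} |α_I E_I^μ f|^q)^{p/q} dν)^{1/p} be the vector-valued operator norm. Then N^q is comparable, with constants depending only on p and q, to sup over nonnegative f with ‖f‖_{L^p(μ)} = 1 and nonnegative g with ‖g‖_{L^{(p/q)'}(ν)} = 1 of ∫_X (Σ_{I ∈ 𝓛} α_I^q · E_I^μ(f^q)) g dν. -/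

import Mathlib

open MeasureTheory ENNReal NNReal Set Filter

/-- A lattice of measurable sets on a measurable space `X`: a union of countable
generations, each generation being a countable disjoint cover of `X`, and each set of
generation `n` being a (countable) disjoint union of sets of generation `n+1`. -/
structure LatticeFamily (X : Type*) [MeasurableSpace X] where
  gen : ℤ → Set (Set X)
  countable : ∀ n, (gen n).Countable
  meas : ∀ n, ∀ I ∈ gen n, MeasurableSet I
  pairwiseDisjoint : ∀ n, (gen n).PairwiseDisjoint id
  cover : ∀ n, ⋃₀ gen n = univ
  subdiv : ∀ n, ∀ I ∈ gen n, ∃ S ⊆ gen (n + 1), I = ⋃₀ S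

/-- The collection of all sets of the lattice. -/
def LatticeFamily.sets {X : Type*} [MeasurableSpace X] (L : LatticeFamily X) : Set (Set X) :=
  ⋃ n, L.gen n

/-- The averaging operator `E_I^μ f = (μ(I)⁻¹ ∫_I f dμ) · 1_I`. -/
noncomputable def avgOp {X : Type*} [MeasurableSpace X] (μ : Measure X) (I : Set X)
    (f : X → ℝ≥0∞) : X → ℝ≥0∞ :=
  I.indicator fun _ => (∫⁻ y in I, f y ∂μ) / μ I

/-- The lattice maximal function `M_μ f(x) = sup {E_I^μ f(x) : I ∈ 𝓛, x ∈ I}`. -/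
noncomputable def maxOp {X : Type*} [MeasurableSpace X] (L : LatticeFamily X) (μ : Measure X)
    (f : X → ℝ≥0∞) : X → ℝ≥0∞ := fun x =>
  ⨆ (I : Set X) (_ : I ∈ L.sets ∧ x ∈ I), (∫⁻ y in I, f y ∂μ) / μ I

/-!
By the duality of `L^{p/q}(ν)` and `L^{(p/q)'}(ν)`, the linearized supremum is the supremum over `f`
of `‖∑_I α_I^q E_I^μ(f^q)‖_{L^{p/q}(ν)}`. Jensen's inequality `(E_I^μ f)^q ≤ E_I^μ(f^q)` bounds
`N^q` by it. Conversely, let `M` be the maximal function over the lattice and `F = (M(f^q))^{1/q}`.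
Then `E_I^μ(f^q) ≤ (E_I^μ F)^q`, because `F^q ≥ E_I^μ(f^q)` on `I`, and
`‖F‖_{L^p(μ)} ≲ ‖f‖_{L^p(μ)}` because `M` is bounded on `L^{p/q}(μ)`. This boundedness follows by
interpolation from a weak type inequality, which needs no covering lemma: lattice sets are nested or
disjoint, so the maximal sets in a finite family of them are disjoint and cover its union.
-/

section Laminar

variable {X : Type*}

/-- A family of sets any two of which are nested or disjoint. -/
def IsLaminar (G : Set (Set X)) : Prop :=
  ∀ I ∈ G, ∀ J ∈ G, I ⊆ J ∨ J ⊆ I ∨ Disjoint I J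

theorem IsLaminar.mono {G H : Set (Set X)} (hG : IsLaminar G) (h : H ⊆ G) : IsLaminar H :=
  fun I hI J hJ => hG I (h hI) J (h hJ)

theorem IsLaminar.pairwise_disjoint_maximal {G : Set (Set X)} (hG : IsLaminar G) :
    {I | Maximal (· ∈ G) I}.Pairwise Disjoint := by
  intro I hI J hJ hne
  rcases hG I hI.prop J hJ.prop with h | h | h
  · exact absurd (hI.eq_of_le hJ.prop h) hne
  · exact absurd (hJ.eq_of_le hI.prop h) hne.symm
  · exact h

theorem sUnion_maximal_eq_of_finite {G : Set (Set X)} (hG : G.Finite) :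
    ⋃₀ {I | Maximal (· ∈ G) I} = ⋃₀ G := by
  refine (sUnion_subset_sUnion fun I hI => hI.prop).antisymm (sUnion_subset fun I hI => ?_)
  obtain ⟨J, hIJ, hJ⟩ := hG.exists_le_maximal hI
  exact subset_sUnion_of_subset _ J hIJ hJ

variable [MeasurableSpace X] {μ ρ : Measure X} {G : Set (Set X)}

theorem IsLaminar.measure_sUnion_le_of_finite (hG : IsLaminar G) (hfin : G.Finite)
    (hmeas : ∀ I ∈ G, MeasurableSet I) (hle : ∀ I ∈ G, μ I ≤ ρ I) : μ (⋃₀ G) ≤ ρ (⋃₀ G) := by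
  have hmax : {I | Maximal (· ∈ G) I} ⊆ G := fun I hI => hI.prop
  have hcount := (hfin.subset hmax).countable
  have hmeas_max I (hI : I ∈ {I | Maximal (· ∈ G) I}) := hmeas I (hmax hI)
  rw [← sUnion_maximal_eq_of_finite hfin,
    measure_sUnion hcount hG.pairwise_disjoint_maximal hmeas_max,
    measure_sUnion hcount hG.pairwise_disjoint_maximal hmeas_max]
  exact ENNReal.tsum_le_tsum fun I => hle I (hmax I.2)

theorem IsLaminar.measure_sUnion_le (hG : IsLaminar G) (hcount : G.Countable)
    (hmeas : ∀ I ∈ G, MeasurableSet I) (hle : ∀ I ∈ G, μ I ≤ ρ I) : μ (⋃₀ G) ≤ ρ (⋃₀ G) := by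
  have := hcount.to_subtype
  have hmono : Monotone fun t : Finset G => ⋃ I ∈ t, (I : Set X) :=
    fun s t hst => biUnion_subset_biUnion_left hst
  rw [sUnion_eq_iUnion, iUnion_eq_iUnion_finset, hmono.directed_le.measure_iUnion]
  refine iSup_le fun t => ?_
  have hsub : Subtype.val '' (t : Set G) ⊆ G := Subtype.coe_image_subset G t
  calc μ (⋃ I ∈ t, (I : Set X)) = μ (⋃₀ (Subtype.val '' (t : Set G))) := by simp [sUnion_image]
    _ ≤ ρ (⋃₀ (Subtype.val '' (t : Set G))) :=
      (hG.mono hsub).measure_sUnion_le_of_finite (t.finite_toSet.image _)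
        (fun I hI => hmeas I (hsub hI)) fun I hI => hle I (hsub hI)
    _ ≤ ρ (⋃ t : Finset G, ⋃ I ∈ t, (I : Set X)) := by
      rw [← iUnion_eq_iUnion_finset, ← sUnion_eq_iUnion]
      exact measure_mono (sUnion_subset_sUnion hsub)

end Laminar

namespace LatticeFamily

variable {X : Type*} [MeasurableSpace X] (L : LatticeFamily X)

theorem exists_mem_gen (n : ℤ) (x : X) : ∃ I ∈ L.gen n, x ∈ I := by
  have h : x ∈ ⋃₀ L.gen n := L.cover n ▸ mem_univ x
  exact h

variable {L} {I J : Set X} {m n : ℤ}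

theorem eq_of_mem_gen {x : X} (hI : I ∈ L.gen n) (hJ : J ∈ L.gen n) (hxI : x ∈ I)
    (hxJ : x ∈ J) : I = J :=
  (L.pairwiseDisjoint n).elim hI hJ (not_disjoint_iff.2 ⟨x, hxI, hxJ⟩)

theorem exists_superset_mem_gen_of_succ (hJ : J ∈ L.gen (n + 1)) (hne : J.Nonempty) :
    ∃ K ∈ L.gen n, J ⊆ K := by
  obtain ⟨x, hxJ⟩ := hne
  obtain ⟨K, hK, hxK⟩ := L.exists_mem_gen n x
  obtain ⟨S, hS, rfl⟩ := L.subdiv n K hK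
  obtain ⟨J', hJ', hxJ'⟩ := hxK
  obtain rfl := eq_of_mem_gen (hS hJ') hJ hxJ' hxJ
  exact ⟨_, hK, subset_sUnion_of_mem hJ'⟩

theorem exists_superset_mem_gen_of_le (hnm : n ≤ m) (hJ : J ∈ L.gen m) (hne : J.Nonempty) :
    ∃ K ∈ L.gen n, J ⊆ K := by
  induction m, hnm using Int.leInduction generalizing J with
  | base => exact ⟨J, hJ, Subset.rfl⟩
  | succ m _ ih =>
    obtain ⟨K, hK, hJK⟩ := exists_superset_mem_gen_of_succ hJ hne
    obtain ⟨K', hK', hKK'⟩ := ih hK (hne.mono hJK)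
    exact ⟨K', hK', hJK.trans hKK'⟩

theorem subset_or_disjoint_of_le (hnm : n ≤ m) (hI : I ∈ L.gen n) (hJ : J ∈ L.gen m) :
    J ⊆ I ∨ Disjoint J I := by
  refine or_iff_not_imp_right.2 fun hJI => ?_
  obtain ⟨x, hxJ, hxI⟩ := not_disjoint_iff.1 hJI
  obtain ⟨K, hK, hJK⟩ := exists_superset_mem_gen_of_le hnm hJ ⟨x, hxJ⟩
  exact hJK.trans (eq_of_mem_gen hK hI (hJK hxJ) hxI).subset

variable (L)

theorem isLaminar_sets : IsLaminar L.sets := by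
  intro I hI J hJ
  obtain ⟨n, hn⟩ := mem_iUnion.1 hI
  obtain ⟨m, hm⟩ := mem_iUnion.1 hJ
  rcases le_total n m with h | h
  · exact (subset_or_disjoint_of_le h hn hm).elim (.inr ∘ .inl) fun h => .inr (.inr h.symm)
  · exact (subset_or_disjoint_of_le h hm hn).imp_right .inr

theorem countable_sets : L.sets.Countable :=
  countable_iUnion L.countable

theorem measurableSet_of_mem_sets (hI : I ∈ L.sets) : MeasurableSet I := by
  obtain ⟨n, hn⟩ := mem_iUnion.1 hI
  exact L.meas n I hn

theorem sigmaFinite {ν : Measure X} (hν : ∀ I ∈ L.sets, ν I < ∞) : SigmaFinite ν :=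
  Measure.sigmaFinite_of_countable (L.countable 0) (fun I hI => hν I (mem_iUnion.2 ⟨0, hI⟩))
    (L.cover 0)

end LatticeFamily

section Average

variable {X : Type*} [MeasurableSpace X] {μ : Measure X} {I : Set X} {f g : X → ℝ≥0∞} {x : X}

theorem avgOp_of_mem (hx : x ∈ I) : avgOp μ I f x = (∫⁻ y in I, f y ∂μ) / μ I :=
  indicator_of_mem hx _

theorem avgOp_of_notMem (hx : x ∉ I) : avgOp μ I f x = 0 :=
  indicator_of_notMem hx _

theorem measurable_avgOp (hI : MeasurableSet I) : Measurable (avgOp μ I f) :=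
  measurable_const.indicator hI

theorem avgOp_congr_ae (h : f =ᵐ[μ] g) : avgOp μ I f = avgOp μ I g := by
  simp only [avgOp, lintegral_congr_ae (ae_restrict_of_ae h)]

theorem avgOp_const_mul (c : ℝ≥0∞) (hf : Measurable f) :
    avgOp μ I (fun y => c * f y) x = c * avgOp μ I f x := by
  by_cases hx : x ∈ I
  · simp only [avgOp_of_mem hx, lintegral_const_mul c hf, mul_div_assoc]
  · simp only [avgOp_of_notMem hx, mul_zero]

theorem rpow_lintegral_le_lintegral_rpow [IsProbabilityMeasure μ] {q : ℝ} (hq : 1 ≤ q)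
    (hf : Measurable f) : (∫⁻ x, f x ∂μ) ^ q ≤ ∫⁻ x, f x ^ q ∂μ := by
  have h := eLpNorm'_le_eLpNorm'_of_exponent_le one_pos hq μ hf.aestronglyMeasurable
  simp only [eLpNorm', enorm_eq_self, ENNReal.rpow_one, div_one, one_div] at h
  exact (ENNReal.le_rpow_inv_iff (zero_lt_one.trans_le hq)).1 h

theorem rpow_avgOp_le_avgOp_rpow (h0 : μ I ≠ 0) (ht : μ I ≠ ∞) {q : ℝ} (hq : 1 ≤ q)
    (hf : Measurable f) : avgOp μ I f x ^ q ≤ avgOp μ I (fun y => f y ^ q) x := by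
  by_cases hx : x ∈ I
  · have := ProbabilityTheory.cond_isProbabilityMeasure_of_finite h0 ht
    have h := rpow_lintegral_le_lintegral_rpow (μ := ProbabilityTheory.cond μ I) hq hf
    simpa only [avgOp_of_mem hx, ENNReal.div_eq_inv_mul, ProbabilityTheory.cond,
      lintegral_smul_measure, smul_eq_mul] using h
  · simp [avgOp_of_notMem hx, zero_lt_one.trans_le hq]

end Average

section LayerCake

variable {X : Type*} [MeasurableSpace X] {μ : Measure X} {f : X → ℝ≥0∞} {s : ℝ}

theorem iSup_min_natCast (a : ℝ≥0∞) : ⨆ n : ℕ, min a n = a := by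
  rw [← inf_iSup_eq, ENNReal.iSup_natCast, inf_top_eq]

theorem lintegral_ennreal_rpow_eq_of_ne_top (hf : Measurable f) (hft : ∀ x, f x ≠ ∞)
    (hs : 0 < s) :
    ∫⁻ x, f x ^ s ∂μ = ENNReal.ofReal s *
      ∫⁻ a in Ioi (0 : ℝ), μ {x | ENNReal.ofReal a < f x} * ENNReal.ofReal (a ^ (s - 1)) := by
  have h := lintegral_rpow_eq_lintegral_meas_lt_mul μ (.of_forall fun x => toReal_nonneg)
    hf.ennreal_toReal.aemeasurable hs
  simp_rw [← ENNReal.ofReal_rpow_of_nonneg toReal_nonneg hs.le, ENNReal.ofReal_toReal (hft _)] at h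
  rw [h]
  congr 1
  refine setLIntegral_congr_fun measurableSet_Ioi fun a ha => ?_
  simp only [ENNReal.ofReal_lt_iff_lt_toReal (mem_Ioi.1 ha).le (hft _)]

theorem lintegral_ennreal_rpow_eq_lintegral_meas_lt_mul (hf : Measurable f) (hs : 0 < s) :
    ∫⁻ x, f x ^ s ∂μ = ENNReal.ofReal s *
      ∫⁻ a in Ioi (0 : ℝ), μ {x | ENNReal.ofReal a < f x} * ENNReal.ofReal (a ^ (s - 1)) := by
  have hmono : Monotone fun (n : ℕ) x => min (f x) n := fun m n hmn x =>
    min_le_min_left _ (Nat.cast_le.2 hmn)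
  have hpow x : f x ^ s = ⨆ n : ℕ, min (f x) n ^ s := by
    simpa only [iSup_min_natCast, ENNReal.orderIsoRpow_apply] using
      (ENNReal.orderIsoRpow s hs).map_iSup fun n : ℕ => min (f x) n
  have hmeas a : μ {x | ENNReal.ofReal a < f x} =
      ⨆ n : ℕ, μ {x | ENNReal.ofReal a < min (f x) n} := by
    have hlevel : Monotone fun n : ℕ => {x | ENNReal.ofReal a < min (f x) n} :=
      fun m n hmn x hx => lt_of_lt_of_le hx (hmono hmn x)
    rw [← hlevel.measure_iUnion]
    congr 1 with x
    simp only [mem_iUnion, mem_ofPred_eq, ← lt_iSup_iff, iSup_min_natCast]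
  simp_rw [hpow, hmeas, ENNReal.iSup_mul]
  rw [lintegral_iSup (fun n => (hf.min measurable_const).pow_const s)
    fun m n hmn x => ENNReal.rpow_le_rpow (hmono hmn x) hs.le, lintegral_iSup, ENNReal.mul_iSup]
  · exact iSup_congr fun n => lintegral_ennreal_rpow_eq_of_ne_top (hf.min measurable_const)
      (fun x => ((min_le_right _ _).trans_lt (natCast_lt_top n)).ne) hs
  · refine fun n => Measurable.mul (Antitone.measurable fun a b hab => ?_) (by fun_prop)
    exact measure_mono fun x hx => (ENNReal.ofReal_le_ofReal hab).trans_lt hx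
  · intro m n hmn a
    dsimp only
    gcongr

end LayerCake

section Maximal

variable {X : Type*} [MeasurableSpace X] {μ : Measure X} {G : Set (Set X)} {f : X → ℝ≥0∞}

/-- The maximal function of the averages over a family `G` of sets; for `G = L.sets` this is the
lattice maximal function `maxOp L μ f`. -/
noncomputable def maximalFn (G : Set (Set X)) (μ : Measure X) (f : X → ℝ≥0∞) (x : X) : ℝ≥0∞ :=
  ⨆ I : G, avgOp μ I f x

theorem measurable_maximalFn (hcount : G.Countable) (hmeas : ∀ I ∈ G, MeasurableSet I) :
    Measurable (maximalFn G μ f) := by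
  have := hcount.to_subtype
  exact .iSup fun I => measurable_avgOp (hmeas I I.2)

theorem exists_mem_of_lt_maximalFn {a : ℝ≥0∞} {x : X} (h : a < maximalFn G μ f x) :
    ∃ I ∈ G, x ∈ I ∧ a < (∫⁻ y in I, f y ∂μ) / μ I := by
  obtain ⟨I, hI⟩ := lt_iSup_iff.1 h
  by_cases hx : x ∈ (I : Set X)
  · exact ⟨I, I.2, hx, avgOp_of_mem hx ▸ hI⟩
  · simp [avgOp_of_notMem hx] at hI

theorem mul_measure_le_of_two_mul_lt_average {a : ℝ≥0∞} {I : Set X} (ha : a ≠ ∞)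
    (hI : MeasurableSet I) (hf : Measurable f) (hav : 2 * a < (∫⁻ y in I, f y ∂μ) / μ I) :
    a * μ I ≤ μ.withDensity f ({x | a < f x} ∩ I) := by
  have hE : MeasurableSet {x | a < f x} := measurableSet_lt measurable_const hf
  have ht : μ I ≠ ∞ := by
    rintro h
    simp [h] at hav
  have hsmall : μ.withDensity f (I \ {x | a < f x}) ≤ a * μ I := by
    rw [withDensity_apply f (hI.diff hE)]
    calc ∫⁻ x in I \ {x | a < f x}, f x ∂μ ≤ ∫⁻ _ in I \ {x | a < f x}, a ∂μ :=
          setLIntegral_mono measurable_const fun x hx => not_lt.1 hx.2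
      _ ≤ a * μ I := by
          rw [setLIntegral_const]
          gcongr
          exact sdiff_subset
  refine ENNReal.le_of_add_le_add_right (mul_ne_top ha ht) ?_
  calc a * μ I + a * μ I = 2 * a * μ I := by ring
    _ ≤ μ.withDensity f I := by
      rw [withDensity_apply f hI]
      exact ENNReal.mul_le_of_le_div hav.le
    _ = μ.withDensity f ({x | a < f x} ∩ I) + μ.withDensity f (I \ {x | a < f x}) := by
      rw [inter_comm, measure_inter_add_sdiff I hE]
    _ ≤ _ := by gcongr

theorem IsLaminar.mul_measure_lt_maximalFn_le (hG : IsLaminar G) (hcount : G.Countable)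
    (hmeas : ∀ I ∈ G, MeasurableSet I) (hf : Measurable f) {a : ℝ≥0∞} (ha : a ≠ ∞) :
    a * μ {x | 2 * a < maximalFn G μ f x} ≤ μ.withDensity f {x | a < f x} := by
  set H := {I ∈ G | 2 * a < (∫⁻ y in I, f y ∂μ) / μ I}
  have hsub : {x | 2 * a < maximalFn G μ f x} ⊆ ⋃₀ H := fun x hx => by
    obtain ⟨I, hI, hxI, haI⟩ := exists_mem_of_lt_maximalFn hx
    exact ⟨I, ⟨hI, haI⟩, hxI⟩
  have hHG : H ⊆ G := fun I hI => hI.1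
  calc a * μ {x | 2 * a < maximalFn G μ f x} ≤ (a • μ) (⋃₀ H) := by
        rw [Measure.smul_apply, smul_eq_mul]
        gcongr
    _ ≤ ((μ.withDensity f).restrict {x | a < f x}) (⋃₀ H) := by
        refine (hG.mono hHG).measure_sUnion_le (hcount.mono hHG) (fun I hI => hmeas I hI.1)
          fun I hI => ?_
        rw [Measure.restrict_apply (hmeas I hI.1), inter_comm]
        exact mul_measure_le_of_two_mul_lt_average ha (hmeas I hI.1) hf hI.2
    _ ≤ μ.withDensity f {x | a < f x} :=
        (measure_mono (subset_univ _)).trans_eq (Measure.restrict_apply_univ _)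

/-- The constant in the `L^r` maximal inequality `IsLaminar.lintegral_maximalFn_rpow_le`. -/
noncomputable def maximalConst (r : ℝ) : ℝ≥0∞ :=
  2 * ENNReal.ofReal (r / (r - 1)) ^ (1 / r)

theorem maximalConst_lt_top {r : ℝ} (hr : 1 < r) : maximalConst r < ∞ :=
  mul_lt_top (by simp) (rpow_lt_top_of_nonneg (by positivity) ofReal_ne_top)

theorem one_le_maximalConst {r : ℝ} (hr : 1 < r) : 1 ≤ maximalConst r := by
  have h : 1 ≤ r / (r - 1) := (one_le_div (sub_pos.2 hr)).2 (by linarith)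
  exact one_le_mul one_le_two (ENNReal.one_le_rpow (one_le_ofReal.2 h) (by positivity))

-- In the layer cake formula for `f ^ (r - 1)` the density `f` supplies the missing power of `f`.
theorem lintegral_rpow_le_of_mul_measure_lt_le {M : X → ℝ≥0∞} (hM : Measurable M)
    (hf : Measurable f)
    (hweak : ∀ a ≠ ∞, a * μ {x | a < M x} ≤ μ.withDensity f {x | a < f x})
    {r : ℝ} (hr : 1 < r) :
    ∫⁻ x, M x ^ r ∂μ ≤ ENNReal.ofReal (r / (r - 1)) * ∫⁻ x, f x ^ r ∂μ := by
  have hr0 : 0 < r := one_pos.trans hr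
  have hr1 : 0 < r - 1 := sub_pos.2 hr
  have hlevel (a : ℝ) (ha : a ∈ Ioi 0) :
      μ {x | ENNReal.ofReal a < M x} * ENNReal.ofReal (a ^ (r - 1)) ≤
        μ.withDensity f {x | ENNReal.ofReal a < f x} * ENNReal.ofReal (a ^ (r - 1 - 1)) := by
    have hpow : a ^ (r - 1) = a * a ^ (r - 1 - 1) := by
      rw [Real.rpow_sub_one ha.ne' (r - 1), mul_div_cancel₀ _ ha.ne']
    rw [hpow, ofReal_mul ha.le, ← mul_assoc, mul_comm (μ _)]
    gcongr
    exact hweak _ ofReal_ne_top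
  calc ∫⁻ x, M x ^ r ∂μ
      = ENNReal.ofReal r * ∫⁻ a in Ioi (0 : ℝ),
          μ {x | ENNReal.ofReal a < M x} * ENNReal.ofReal (a ^ (r - 1)) :=
        lintegral_ennreal_rpow_eq_lintegral_meas_lt_mul hM hr0
    _ ≤ ENNReal.ofReal r * ∫⁻ a in Ioi (0 : ℝ), μ.withDensity f {x | ENNReal.ofReal a < f x} *
          ENNReal.ofReal (a ^ (r - 1 - 1)) := by
        gcongr ENNReal.ofReal r * ?_
        exact setLIntegral_mono' measurableSet_Ioi hlevel
    _ = ENNReal.ofReal (r / (r - 1)) * ∫⁻ x, f x ^ (r - 1) ∂μ.withDensity f := by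
        rw [lintegral_ennreal_rpow_eq_lintegral_meas_lt_mul hf hr1, ← mul_assoc,
          ← ofReal_mul (by positivity), div_mul_cancel₀ _ hr1.ne']
    _ = ENNReal.ofReal (r / (r - 1)) * ∫⁻ x, f x ^ r ∂μ := by
        rw [lintegral_withDensity_eq_lintegral_mul μ hf (hf.pow_const _)]
        congr! 3 with x
        rw [Pi.mul_apply]
        nth_rw 1 [← ENNReal.rpow_one (f x)]
        rw [← ENNReal.rpow_add_of_nonneg _ _ zero_le_one hr1.le, add_sub_cancel]

theorem IsLaminar.lintegral_maximalFn_rpow_le (hG : IsLaminar G) (hcount : G.Countable)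
    (hmeas : ∀ I ∈ G, MeasurableSet I) (hf : Measurable f) {r : ℝ} (hr : 1 < r) :
    (∫⁻ x, maximalFn G μ f x ^ r ∂μ) ^ (1 / r) ≤
      maximalConst r * (∫⁻ x, f x ^ r ∂μ) ^ (1 / r) := by
  have hr0 : 0 < r := one_pos.trans hr
  have hM : Measurable (maximalFn G μ f) := measurable_maximalFn hcount hmeas
  have htwo (a : ℝ≥0∞) : 2 * (2⁻¹ * a) = a := by
    rw [← mul_assoc, ENNReal.mul_inv_cancel two_ne_zero ofNat_ne_top, one_mul]
  have hhalf : ∫⁻ x, (2⁻¹ * maximalFn G μ f x) ^ r ∂μ ≤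
      ENNReal.ofReal (r / (r - 1)) * ∫⁻ x, f x ^ r ∂μ := by
    refine lintegral_rpow_le_of_mul_measure_lt_le (hM.const_mul _) hf (fun a ha => ?_) hr
    convert hG.mul_measure_lt_maximalFn_le hcount hmeas hf ha using 5 with x
    rw [← ENNReal.mul_lt_mul_iff_right two_ne_zero ofNat_ne_top, htwo]
  calc (∫⁻ x, maximalFn G μ f x ^ r ∂μ) ^ (1 / r)
      = (∫⁻ x, 2 ^ r * (2⁻¹ * maximalFn G μ f x) ^ r ∂μ) ^ (1 / r) := by
        simp_rw [← ENNReal.mul_rpow_of_nonneg _ _ hr0.le, htwo]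
    _ = 2 * (∫⁻ x, (2⁻¹ * maximalFn G μ f x) ^ r ∂μ) ^ (1 / r) := by
        rw [lintegral_const_mul _ ((hM.const_mul _).pow_const _),
          ENNReal.mul_rpow_of_nonneg _ _ (by positivity), one_div, ENNReal.rpow_rpow_inv hr0.ne']
    _ ≤ 2 * (ENNReal.ofReal (r / (r - 1)) * ∫⁻ x, f x ^ r ∂μ) ^ (1 / r) := by gcongr
    _ = maximalConst r * (∫⁻ x, f x ^ r ∂μ) ^ (1 / r) := by
        rw [ENNReal.mul_rpow_of_nonneg _ _ (by positivity), maximalConst, mul_assoc]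

theorem avgOp_le_avgOp_maximalFn_rpow {I : Set X} (hIG : I ∈ G) (hI : MeasurableSet I)
    (h0 : μ I ≠ 0) (ht : μ I ≠ ∞) {q : ℝ} (hq : 0 < q) (x : X) :
    avgOp μ I f x ≤ avgOp μ I (fun y => maximalFn G μ f y ^ q⁻¹) x ^ q := by
  by_cases hx : x ∈ I
  · rw [← ENNReal.rpow_inv_le_iff hq, avgOp_of_mem (f := fun y => maximalFn G μ f y ^ q⁻¹) hx,
      ENNReal.le_div_iff_mul_le (.inl h0) (.inl ht), ← setLIntegral_const]
    refine setLIntegral_mono' hI fun y hy => ENNReal.rpow_le_rpow ?_ (inv_nonneg.2 hq.le)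
    rw [avgOp_of_mem hx, ← avgOp_of_mem hy]
    exact le_iSup (fun J : G => avgOp μ J f y) ⟨I, hIG⟩
  · simp [avgOp_of_notMem hx]

end Maximal

section Duality

variable {X : Type*} [MeasurableSpace X] {ν : Measure X} {h : X → ℝ≥0∞}

/-- The nonnegative functions of norm one in `L^p(μ)`. -/
abbrev LpUnitSphere (μ : Measure X) (p : ℝ) : Type _ :=
  {f : X → ℝ≥0∞ // Measurable f ∧ ∫⁻ x, f x ^ p ∂μ = 1}

theorem exists_measurable_le_lt_lintegral [SigmaFinite ν] {c : ℝ≥0∞} (hc : c < ∫⁻ x, h x ∂ν) :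
    ∃ φ : X → ℝ≥0∞, Measurable φ ∧ φ ≤ h ∧ ∫⁻ x, φ x ∂ν ≠ ∞ ∧ c < ∫⁻ x, φ x ∂ν := by
  rw [lintegral_eq_nnreal] at hc
  obtain ⟨ψ, hψ⟩ := lt_iSup_iff.1 hc
  obtain ⟨hψh, hcψ⟩ := lt_iSup_iff.1 hψ
  rw [← SimpleFunc.lintegral_eq_lintegral] at hcψ
  obtain ⟨φ, hφψ, hφt, hcφ⟩ := SimpleFunc.exists_lt_lintegral_simpleFunc_of_lt_lintegral hcψ
  exact ⟨fun x => φ x, φ.measurable.coe_nnreal_ennreal,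
    fun x => (ENNReal.coe_le_coe.2 (hφψ x)).trans (hψh x), hφt.ne, hcφ⟩

variable {r s : ℝ}

-- The extremal function in Hölder's inequality is `φ ^ (1 / s)`, normalised.
theorem lintegral_rpow_le_iSup_of_le (hrs : r.HolderConjugate s) {φ : X → ℝ≥0∞}
    (hφ : Measurable φ) (hφh : ∀ x, φ x ≤ h x ^ r) (hfin : ∫⁻ x, φ x ∂ν ≠ ∞) :
    (∫⁻ x, φ x ∂ν) ^ (1 / r) ≤ ⨆ g : LpUnitSphere ν s, ∫⁻ x, h x * g.1 x ∂ν := by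
  set A := ∫⁻ x, φ x ∂ν with hA
  by_cases hA0 : A = 0
  · simp [hA0, hrs.pos]
  have hexp : 1 / r = 1 + -s⁻¹ := by
    rw [one_div, ← hrs.inv_add_inv_eq_one, add_neg_cancel_right]
  have hgm : Measurable fun x => A ^ (-s⁻¹) * φ x ^ s⁻¹ := (hφ.pow_const _).const_mul _
  have hg1 : ∫⁻ x, (A ^ (-s⁻¹) * φ x ^ s⁻¹) ^ s ∂ν = 1 := by
    simp_rw [ENNReal.mul_rpow_of_nonneg _ _ hrs.symm.nonneg, ENNReal.rpow_inv_rpow hrs.symm.ne_zero,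
      ENNReal.rpow_neg, ENNReal.inv_rpow, ENNReal.rpow_inv_rpow hrs.symm.ne_zero]
    rw [lintegral_const_mul _ hφ, ← hA, ENNReal.inv_mul_cancel hA0 hfin]
  calc A ^ (1 / r) = ∫⁻ x, A ^ (-s⁻¹) * φ x ∂ν := by
        rw [lintegral_const_mul _ hφ, ← hA, hexp, ENNReal.rpow_add _ _ hA0 hfin, ENNReal.rpow_one,
          mul_comm]
    _ ≤ ∫⁻ x, h x * (A ^ (-s⁻¹) * φ x ^ s⁻¹) ∂ν := by
        refine lintegral_mono fun x => ?_
        rw [mul_left_comm]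
        gcongr
        calc φ x = φ x ^ r⁻¹ * φ x ^ s⁻¹ := by
              rw [← ENNReal.rpow_add_of_nonneg _ _ hrs.inv_nonneg hrs.symm.inv_nonneg,
                hrs.inv_add_inv_eq_one, ENNReal.rpow_one]
          _ ≤ h x * φ x ^ s⁻¹ := by
              gcongr
              exact (ENNReal.rpow_inv_le_iff hrs.pos).2 (hφh x)
    _ ≤ ⨆ g : LpUnitSphere ν s, ∫⁻ x, h x * g.1 x ∂ν :=
        le_iSup (fun g : LpUnitSphere ν s => ∫⁻ x, h x * g.1 x ∂ν) ⟨_, hgm, hg1⟩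

theorem lintegral_rpow_eq_iSup_lintegral_mul [SigmaFinite ν] (hrs : r.HolderConjugate s)
    (hh : Measurable h) :
    (∫⁻ x, h x ^ r ∂ν) ^ (1 / r) = ⨆ g : LpUnitSphere ν s, ∫⁻ x, h x * g.1 x ∂ν := by
  apply le_antisymm
  · rw [one_div, ENNReal.rpow_inv_le_iff hrs.pos]
    refine le_of_forall_lt fun c hc => ?_
    obtain ⟨φ, hφ, hφh, hfin, hcφ⟩ := exists_measurable_le_lt_lintegral hc
    refine hcφ.trans_le ((ENNReal.rpow_inv_le_iff hrs.pos).1 ?_)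
    rw [← one_div]
    exact lintegral_rpow_le_iSup_of_le hrs hφ hφh hfin
  · refine iSup_le fun ⟨g, hg, hg1⟩ => ?_
    simpa [hg1] using lintegral_mul_le_Lp_mul_Lq ν hrs hh.aemeasurable hg.aemeasurable

end Duality

section OperatorNorm

variable {X : Type*} [MeasurableSpace X] {G : Set (Set X)}

/-- The `q`-th power `∑_I (α_I E_I^μ f)^q` of the pointwise `ℓ^q` norm of `{α_I E_I^μ f}`. -/
noncomputable def vectorSum (μ : Measure X) (α : G → ℝ≥0∞) (q : ℝ) (f : X → ℝ≥0∞) (x : X) :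
    ℝ≥0∞ :=
  ∑' I : G, (α I * avgOp μ I f x) ^ q

/-- The linearization `∑_I α_I^q E_I^μ(f^q)` of `vectorSum`. -/
noncomputable def linearizedSum (μ : Measure X) (α : G → ℝ≥0∞) (q : ℝ) (f : X → ℝ≥0∞) (x : X) :
    ℝ≥0∞ :=
  ∑' I : G, α I ^ q * avgOp μ I (fun y => f y ^ q) x

/-- The norm of `{α_I E_I^μ f}` in `L^p(ℓ^q, ν)`. -/
noncomputable def vectorNorm (μ ν : Measure X) (α : G → ℝ≥0∞) (p q : ℝ) (f : X → ℝ≥0∞) : ℝ≥0∞ :=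
  (∫⁻ x, vectorSum μ α q f x ^ (p / q) ∂ν) ^ (1 / p)

/-- The norm of `f ↦ {α_I E_I^μ f}` as an operator from `L^p(μ)` to `L^p(ℓ^q, ν)`. -/
noncomputable def vectorOpNorm (μ ν : Measure X) (α : G → ℝ≥0∞) (p q : ℝ) : ℝ≥0∞ :=
  ⨆ f : LpUnitSphere μ p, vectorNorm μ ν α p q f.1

/-- The supremum of the linearized form `∫ (∑_I α_I^q E_I^μ(f^q)) g dν` over the unit spheres of
`L^p(μ)` and `L^{(p/q)'}(ν)`. -/
noncomputable def linearizedNorm (μ ν : Measure X) (α : G → ℝ≥0∞) (p q : ℝ) : ℝ≥0∞ :=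
  ⨆ f : LpUnitSphere μ p, ⨆ g : LpUnitSphere ν (p / q / (p / q - 1)),
    ∫⁻ x, linearizedSum μ α q f.1 x * g.1 x ∂ν

variable {μ ν : Measure X} {α : G → ℝ≥0∞} {p q : ℝ} {f : X → ℝ≥0∞}

theorem measurable_vectorSum (hcount : G.Countable) (hmeas : ∀ I ∈ G, MeasurableSet I) :
    Measurable (vectorSum μ α q f) := by
  have := hcount.to_subtype
  exact .tsum fun I => ((measurable_avgOp (hmeas I I.2)).const_mul _).pow_const _

theorem measurable_linearizedSum (hcount : G.Countable) (hmeas : ∀ I ∈ G, MeasurableSet I) :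
    Measurable (linearizedSum μ α q f) := by
  have := hcount.to_subtype
  exact .tsum fun I => (measurable_avgOp (hmeas I I.2)).const_mul _

theorem vectorSum_le_linearizedSum (hμ : ∀ I ∈ G, 0 < μ I ∧ μ I < ∞) (hq : 1 ≤ q)
    (hf : Measurable f) (x : X) : vectorSum μ α q f x ≤ linearizedSum μ α q f x := by
  refine ENNReal.tsum_le_tsum fun I => ?_
  rw [ENNReal.mul_rpow_of_nonneg _ _ (zero_le_one.trans hq)]
  gcongr
  exact rpow_avgOp_le_avgOp_rpow (hμ I I.2).1.ne' (hμ I I.2).2.ne hq hf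

theorem linearizedSum_le_vectorSum_maximalFn (hmeas : ∀ I ∈ G, MeasurableSet I)
    (hμ : ∀ I ∈ G, 0 < μ I ∧ μ I < ∞) (hq : 0 < q) (x : X) :
    linearizedSum μ α q f x ≤
      vectorSum μ α q (fun y => maximalFn G μ (fun z => f z ^ q) y ^ q⁻¹) x := by
  refine ENNReal.tsum_le_tsum fun I => ?_
  rw [ENNReal.mul_rpow_of_nonneg _ _ hq.le]
  gcongr
  exact avgOp_le_avgOp_maximalFn_rpow I.2 (hmeas I I.2) (hμ I I.2).1.ne' (hμ I I.2).2.ne hq x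

theorem vectorSum_const_mul (hq : 0 ≤ q) (c : ℝ≥0∞) (hf : Measurable f) (x : X) :
    vectorSum μ α q (fun y => c * f y) x = c ^ q * vectorSum μ α q f x := by
  simp_rw [vectorSum, avgOp_const_mul c hf, mul_left_comm _ c, ENNReal.mul_rpow_of_nonneg c _ hq,
    ENNReal.tsum_mul_left]

theorem vectorNorm_congr_ae {g : X → ℝ≥0∞} (h : f =ᵐ[μ] g) :
    vectorNorm μ ν α p q f = vectorNorm μ ν α p q g := by
  simp only [vectorNorm, vectorSum, avgOp_congr_ae h]

theorem vectorNorm_const_mul (hcount : G.Countable) (hmeas : ∀ I ∈ G, MeasurableSet I)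
    (hp : 0 < p) (hq : 0 < q) (c : ℝ≥0∞) (hf : Measurable f) :
    vectorNorm μ ν α p q (fun y => c * f y) = c * vectorNorm μ ν α p q f := by
  simp_rw [vectorNorm, vectorSum_const_mul hq.le c hf,
    ENNReal.mul_rpow_of_nonneg _ _ (div_pos hp hq).le, ← ENNReal.rpow_mul c,
    mul_div_cancel₀ p hq.ne']
  rw [lintegral_const_mul _ ((measurable_vectorSum hcount hmeas).pow_const _),
    ENNReal.mul_rpow_of_nonneg _ _ (by positivity), one_div, ENNReal.rpow_rpow_inv hp.ne']

theorem vectorNorm_rpow :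
    vectorNorm μ ν α p q f ^ q = (∫⁻ x, vectorSum μ α q f x ^ (p / q) ∂ν) ^ (1 / (p / q)) := by
  rw [vectorNorm, ← ENNReal.rpow_mul, one_div_div, one_div_mul_eq_div]

theorem vectorNorm_le_vectorOpNorm_mul (hcount : G.Countable)
    (hmeas : ∀ I ∈ G, MeasurableSet I) (hp : 0 < p) (hq : 0 < q) (hf : Measurable f)
    (hfin : ∫⁻ x, f x ^ p ∂μ ≠ ∞) :
    vectorNorm μ ν α p q f ≤ vectorOpNorm μ ν α p q * (∫⁻ x, f x ^ p ∂μ) ^ (1 / p) := by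
  set k := (∫⁻ x, f x ^ p ∂μ) ^ (1 / p) with hk
  have hkp : k ^ p = ∫⁻ x, f x ^ p ∂μ := by rw [hk, one_div, ENNReal.rpow_inv_rpow hp.ne']
  have hkt : k ≠ ∞ := rpow_ne_top_of_nonneg (by positivity) hfin
  by_cases hk0 : k = 0
  · have hf0 : f =ᵐ[μ] fun x => 0 * f x := by
      rw [hk0, ENNReal.zero_rpow_of_pos hp, eq_comm, lintegral_eq_zero_iff (hf.pow_const p)] at hkp
      filter_upwards [hkp] with x hx
      simpa [hp, hp.not_gt] using hx
    rw [vectorNorm_congr_ae hf0, vectorNorm_const_mul hcount hmeas hp hq 0 hf, zero_mul]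
    exact zero_le
  · have hg1 : ∫⁻ x, (k⁻¹ * f x) ^ p ∂μ = 1 := by
      simp_rw [ENNReal.mul_rpow_of_nonneg _ _ hp.le]
      rw [lintegral_const_mul _ (hf.pow_const p), ← hkp, ENNReal.inv_rpow]
      exact ENNReal.inv_mul_cancel (by simp [hk0, hkt]) (by simp [hk0, hkt])
    have hle : k⁻¹ * vectorNorm μ ν α p q f ≤ vectorOpNorm μ ν α p q := by
      rw [← vectorNorm_const_mul hcount hmeas hp hq _ hf]
      exact le_iSup (fun g : LpUnitSphere μ p => vectorNorm μ ν α p q g.1)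
        ⟨_, hf.const_mul _, hg1⟩
    rwa [← ENNReal.div_le_iff hk0 hkt, ENNReal.div_eq_inv_mul]

theorem linearizedNorm_eq_iSup [SigmaFinite ν] (hcount : G.Countable)
    (hmeas : ∀ I ∈ G, MeasurableSet I) (hpq : 1 < p / q) :
    linearizedNorm μ ν α p q = ⨆ f : LpUnitSphere μ p,
      (∫⁻ x, linearizedSum μ α q f.1 x ^ (p / q) ∂ν) ^ (1 / (p / q)) :=
  iSup_congr fun _ => (lintegral_rpow_eq_iSup_lintegral_mul (.conjExponent hpq)
    (measurable_linearizedSum hcount hmeas)).symm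

theorem vectorOpNorm_rpow_le_linearizedNorm [SigmaFinite ν] (hcount : G.Countable)
    (hmeas : ∀ I ∈ G, MeasurableSet I) (hμ : ∀ I ∈ G, 0 < μ I ∧ μ I < ∞) (hq : 1 ≤ q)
    (hqp : q < p) : vectorOpNorm μ ν α p q ^ q ≤ linearizedNorm μ ν α p q := by
  have hq0 : 0 < q := one_pos.trans_le hq
  have hpq : 1 < p / q := (one_lt_div hq0).2 hqp
  rw [linearizedNorm_eq_iSup hcount hmeas hpq, ← ENNReal.le_rpow_inv_iff hq0]
  refine iSup_le fun f => ?_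
  rw [ENNReal.le_rpow_inv_iff hq0, vectorNorm_rpow]
  refine le_iSup_of_le f ?_
  gcongr with x
  exact vectorSum_le_linearizedSum hμ hq f.2.1 x

theorem linearizedNorm_le_maximalConst_mul [SigmaFinite ν] (hG : IsLaminar G)
    (hcount : G.Countable) (hmeas : ∀ I ∈ G, MeasurableSet I)
    (hμ : ∀ I ∈ G, 0 < μ I ∧ μ I < ∞) (hq : 0 < q) (hqp : q < p) :
    linearizedNorm μ ν α p q ≤ maximalConst (p / q) * vectorOpNorm μ ν α p q ^ q := by
  have hp : 0 < p := hq.trans hqp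
  have hpq : 1 < p / q := (one_lt_div hq).2 hqp
  rw [linearizedNorm_eq_iSup hcount hmeas hpq]
  refine iSup_le fun ⟨f, hf, hf1⟩ => ?_
  set F : X → ℝ≥0∞ := fun y => maximalFn G μ (fun z => f z ^ q) y ^ q⁻¹
  have hF : Measurable F := (measurable_maximalFn hcount hmeas).pow_const _
  have hFp : (∫⁻ x, F x ^ p ∂μ) ^ (1 / (p / q)) ≤ maximalConst (p / q) := by
    have h := hG.lintegral_maximalFn_rpow_le (μ := μ) hcount hmeas (hf.pow_const q) hpq
    simp_rw [← ENNReal.rpow_mul (f _), mul_div_cancel₀ p hq.ne', hf1, ENNReal.one_rpow,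
      mul_one] at h
    simpa only [F, ← ENNReal.rpow_mul, inv_mul_eq_div] using h
  have hfin : ∫⁻ x, F x ^ p ∂μ ≠ ∞ := fun h => by
    simp [h, hp, hq, (maximalConst_lt_top hpq).ne] at hFp
  calc (∫⁻ x, linearizedSum μ α q f x ^ (p / q) ∂ν) ^ (1 / (p / q))
      ≤ vectorNorm μ ν α p q F ^ q := by
        rw [vectorNorm_rpow]
        gcongr with x
        exact linearizedSum_le_vectorSum_maximalFn hmeas hμ hq x
    _ ≤ (vectorOpNorm μ ν α p q * (∫⁻ x, F x ^ p ∂μ) ^ (1 / p)) ^ q := by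
        gcongr
        exact vectorNorm_le_vectorOpNorm_mul hcount hmeas hp hq hF hfin
    _ = (∫⁻ x, F x ^ p ∂μ) ^ (1 / (p / q)) * vectorOpNorm μ ν α p q ^ q := by
        rw [ENNReal.mul_rpow_of_nonneg _ _ hq.le, ← ENNReal.rpow_mul, one_div_div,
          one_div_mul_eq_div, mul_comm]
    _ ≤ maximalConst (p / q) * vectorOpNorm μ ν α p q ^ q := by gcongr

variable (μ ν α) in
theorem operator_norm_comparable_linearized_general (hq : 1 ≤ q) (hqp : q < p)
    [SigmaFinite ν] (hG : IsLaminar G) (hcount : G.Countable)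
    (hmeas : ∀ I ∈ G, MeasurableSet I) (hμ : ∀ I ∈ G, 0 < μ I ∧ μ I < ∞) :
    vectorOpNorm μ ν α p q ^ q ≤ maximalConst (p / q) * linearizedNorm μ ν α p q ∧
      linearizedNorm μ ν α p q ≤ maximalConst (p / q) * vectorOpNorm μ ν α p q ^ q :=
  have hq0 : 0 < q := one_pos.trans_le hq
  ⟨(vectorOpNorm_rpow_le_linearizedNorm hcount hmeas hμ hq hqp).trans
      (le_mul_of_one_le_left zero_le (one_le_maximalConst ((one_lt_div hq0).2 hqp))),
    linearizedNorm_le_maximalConst_mul hG hcount hmeas hμ hq0 hqp⟩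

end OperatorNorm

/-- For `1 ≤ q < p < ∞`, the `q`-th power of the vector-valued operator
norm `N = sup_{‖f‖_{L^p(μ)} = 1} ‖{α_I E_I^μ f}‖_{L^p(ℓ^q,ν)}` is comparable, with constants
depending only on `p, q`, to
`sup_{‖f‖_{L^p(μ)}=1, ‖g‖_{L^{(p/q)'}(ν)}=1} ∫ (∑_I α_I^q E_I^μ(f^q)) g dν`. -/
theorem operator_norm_comparable_linearized (p q : ℝ) (hq : 1 ≤ q) (hqp : q < p) :
    ∃ c : ℝ≥0∞, 0 < c ∧ c < ∞ ∧
      ∀ (X : Type) [MeasurableSpace X] (L : LatticeFamily X) (μ ν : Measure X),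
        (∀ I ∈ L.sets, 0 < μ I ∧ μ I < ∞) → (∀ I ∈ L.sets, ν I < ∞) →
        ∀ α : Set X → ℝ≥0,
        (⨆ f : {f : X → ℝ≥0∞ // Measurable f ∧ ∫⁻ x, f x ^ p ∂μ = 1},
            (∫⁻ x, (∑' I : L.sets, ((α I.1 : ℝ≥0∞) * avgOp μ I.1 f.1 x) ^ q) ^ (p / q) ∂ν)
              ^ (1 / p)) ^ q
          ≤ c * (⨆ f : {f : X → ℝ≥0∞ // Measurable f ∧ ∫⁻ x, f x ^ p ∂μ = 1},
              ⨆ g : {g : X → ℝ≥0∞ //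
                  Measurable g ∧ ∫⁻ x, g x ^ ((p / q) / (p / q - 1)) ∂ν = 1},
                ∫⁻ x, (∑' I : L.sets,
                    (α I.1 : ℝ≥0∞) ^ q * avgOp μ I.1 (fun y => f.1 y ^ q) x) * g.1 x ∂ν) ∧
        (⨆ f : {f : X → ℝ≥0∞ // Measurable f ∧ ∫⁻ x, f x ^ p ∂μ = 1},
            ⨆ g : {g : X → ℝ≥0∞ //
                Measurable g ∧ ∫⁻ x, g x ^ ((p / q) / (p / q - 1)) ∂ν = 1},
              ∫⁻ x, (∑' I : L.sets,
                  (α I.1 : ℝ≥0∞) ^ q * avgOp μ I.1 (fun y => f.1 y ^ q) x) * g.1 x ∂ν)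
          ≤ c * (⨆ f : {f : X → ℝ≥0∞ // Measurable f ∧ ∫⁻ x, f x ^ p ∂μ = 1},
              (∫⁻ x, (∑' I : L.sets,
                  ((α I.1 : ℝ≥0∞) * avgOp μ I.1 f.1 x) ^ q) ^ (p / q) ∂ν) ^ (1 / p)) ^ q := by
  have hpq : 1 < p / q := (one_lt_div (one_pos.trans_le hq)).2 hqp
  refine ⟨maximalConst (p / q), one_pos.trans_le (one_le_maximalConst hpq),
    maximalConst_lt_top hpq, fun X _ L μ ν hμ hν α => ?_⟩
  have := L.sigmaFinite hν
  exact operator_norm_comparable_linearized_general μ ν (fun I => α I) hq hqp L.isLaminar_sets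
    L.countable_sets (fun _ => L.measurableSet_of_mem_sets) hμ
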